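/- There exists a finite simple triangle-free graph with maximum degree 4 and chromatic number 4. Consequently, the bound χ(G) ≤ ⌈(Δ(G)+3)/2⌉ in Reed's conjecture for triangle-free graphs cannot be improved to ⌈(Δ(G)+3)/2⌉ − 1 at maximum degree 4. -/

import Mathlib

/-- Adjacency lists (each edge once) of the Chvátal graph. -/
def chvatalEdges : List (Fin 12 × Fin 12) :=
  [(0, 1), (0, 4), (0, 6), (0, 9), (1, 2), (1, 5), (1, 7), (2, 3), (2, 6), (2, 8), (3, 4), (3, 7), (3, 9), (4, 5), (4, 8), (5, 10), (5, 11), (6, 10), (6, 11), (7, 8), (7, 11), (8, 10), (9, 10), (9, 11)]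

/-- The Chvátal graph. -/
def chvatal : SimpleGraph (Fin 12) where
  Adj u v := (u, v) ∈ chvatalEdges ∨ (v, u) ∈ chvatalEdges
  symm := ⟨fun _ _ h => h.symm⟩
  loopless := ⟨by decide⟩

instance : DecidableRel chvatal.Adj := fun u v =>
  inferInstanceAs (Decidable ((u, v) ∈ chvatalEdges ∨ (v, u) ∈ chvatalEdges))

set_option synthInstance.maxSize 4000 in
set_option synthInstance.maxHeartbeats 400000 in
set_option maxRecDepth 10000 in
theorem chvatal_no_three :
    ∀ x0 : Fin 3, 
    ∀ x1 : Fin 3, x0 ≠ x1 → 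
    ∀ x2 : Fin 3, x1 ≠ x2 → 
    ∀ x6 : Fin 3, x0 ≠ x6 → x2 ≠ x6 → 
    ∀ x3 : Fin 3, x2 ≠ x3 → 
    ∀ x4 : Fin 3, x0 ≠ x4 → x3 ≠ x4 → 
    ∀ x5 : Fin 3, x1 ≠ x5 → x4 ≠ x5 → 
    ∀ x7 : Fin 3, x1 ≠ x7 → x3 ≠ x7 → 
    ∀ x8 : Fin 3, x2 ≠ x8 → x4 ≠ x8 → x7 ≠ x8 → 
    ∀ x10 : Fin 3, x6 ≠ x10 → x5 ≠ x10 → x8 ≠ x10 → 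
    ∀ x9 : Fin 3, x0 ≠ x9 → x3 ≠ x9 → x10 ≠ x9 → 
    ∀ x11 : Fin 3, x6 ≠ x11 → x5 ≠ x11 → x7 ≠ x11 → x9 ≠ x11 → 
    False := by
  decide +kernel

theorem chvatal_not_colorable : ¬ chvatal.Colorable 3 := by
  rintro ⟨C⟩
  have hA : ∀ u v, chvatal.Adj u v → chvatal.Adj u v := fun _ _ h => h
  exact chvatal_no_three (C 0)
    (C 1)
    (C.valid (hA 0 1 (by decide)))
    (C 2)
    (C.valid (hA 1 2 (by decide)))
    (C 6)
    (C.valid (hA 0 6 (by decide)))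
    (C.valid (hA 2 6 (by decide)))
    (C 3)
    (C.valid (hA 2 3 (by decide)))
    (C 4)
    (C.valid (hA 0 4 (by decide)))
    (C.valid (hA 3 4 (by decide)))
    (C 5)
    (C.valid (hA 1 5 (by decide)))
    (C.valid (hA 4 5 (by decide)))
    (C 7)
    (C.valid (hA 1 7 (by decide)))
    (C.valid (hA 3 7 (by decide)))
    (C 8)
    (C.valid (hA 2 8 (by decide)))
    (C.valid (hA 4 8 (by decide)))
    (C.valid (hA 7 8 (by decide)))
    (C 10)
    (C.valid (hA 6 10 (by decide)))
    (C.valid (hA 5 10 (by decide)))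
    (C.valid (hA 8 10 (by decide)))
    (C 9)
    (C.valid (hA 0 9 (by decide)))
    (C.valid (hA 3 9 (by decide)))
    (C.valid (hA 10 9 (by decide)))
    (C 11)
    (C.valid (hA 6 11 (by decide)))
    (C.valid (hA 5 11 (by decide)))
    (C.valid (hA 7 11 (by decide)))
    (C.valid (hA 9 11 (by decide)))

theorem chvatal_colorable : chvatal.Colorable 4 :=
  ⟨SimpleGraph.Coloring.mk (![0, 1, 0, 1, 2, 0, 1, 0, 1, 3, 2, 2] : Fin 12 → Fin 4)
    (by
      have h : ∀ u v : Fin 12, chvatal.Adj u v →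
          (![0, 1, 0, 1, 2, 0, 1, 0, 1, 3, 2, 2] : Fin 12 → Fin 4) u ≠
          (![0, 1, 0, 1, 2, 0, 1, 0, 1, 3, 2, 2] : Fin 12 → Fin 4) v := by
        decide +kernel
      exact fun {u v} => h u v)⟩

theorem chvatal_degree (v : Fin 12) : (chvatal.neighborSet v).ncard = 4 := by
  have h : ∀ v, (chvatal.neighborFinset v).card = 4 := by decide +kernel
  rw [← SimpleGraph.coe_neighborFinset, Set.ncard_coe_finset]
  exact h v

theorem chvatal_cliqueFree : chvatal.CliqueFree 3 := by
  have h : ∀ a b, chvatal.Adj a b → ∀ c, chvatal.Adj a c → ¬ chvatal.Adj b c := by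
    decide +kernel
  intro s hs
  obtain ⟨a, b, c, hab, hac, hbc, -⟩ := SimpleGraph.is3Clique_iff.mp hs
  exact h a b hab c hac hbc

/-- There exists a finite simple triangle-free graph with maximum degree 4 (every vertex
has at most 4 neighbors and some vertex has exactly 4 neighbors) and chromatic number 4.
Since `⌈(4 + 3) / 2⌉ = 4`, such a graph shows that the bound `χ(G) ≤ ⌈(Δ(G) + 3) / 2⌉`
in Reed's conjecture for triangle-free graphs cannot be improved to
`⌈(Δ(G) + 3) / 2⌉ − 1 = 3` at maximum degree 4. -/
theorem stmt_14 :
    ∃ (n : ℕ) (G : SimpleGraph (Fin n)),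
      G.CliqueFree 3 ∧
      (∀ v, (G.neighborSet v).ncard ≤ 4) ∧ (∃ v, (G.neighborSet v).ncard = 4) ∧
      G.chromaticNumber = 4 := by
  refine ⟨12, chvatal, chvatal_cliqueFree, fun v => (chvatal_degree v).le,
    ⟨0, chvatal_degree 0⟩, le_antisymm ?_ ?_⟩
  · exact_mod_cast chvatal_colorable.chromaticNumber_le
  · by_contra hlt
    rw [not_le] at hlt
    apply chvatal_not_colorable
    apply SimpleGraph.chromaticNumber_le_iff_colorable.mp
    exact Order.le_of_lt_add_one (by exact_mod_cast hlt)
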